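/- Let F be an algebraically closed field of characteristic zero and let n ≥ 29. In the polynomial ring R = MvPolynomial ((Fin n × Fin n) ⊕ (Fin n × Fin n) ⊕ (Fin n × Fin n)) F, let X, Y, Z be the generic n×n matrices whose entries are the variables of the three summands, and let I be the ideal of R generated by the 3n² entries of the matrices X*Y − Y*X, X*Z − Z*X, and Y*Z − Z*Y. Then the radical of I is NOT a prime ideal (equivalently, the zero locus of I in the prime spectrum of R is not irreducible). -/

import Mathlib

open MvPolynomial

/-- Krylov matrix of `X` at the basis vector `e`. -/
def kry {A : Type*} [CommRing A] {n : ℕ} (X : Matrix (Fin n) (Fin n) A) (e : Fin n) :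
    Matrix (Fin n) (Fin n) A := Matrix.of fun i k => (X ^ (k : ℕ)) i e

theorem kry_map {A B : Type*} [CommRing A] [CommRing B] {n : ℕ} (X : Matrix (Fin n) (Fin n) A)
    (e : Fin n) (g : A →+* B) : g (kry X e).det = (kry (X.map g) e).det := by
  rw [RingHom.map_det]
  congr 1
  ext i k
  have : (X.map g) ^ (k : ℕ) = (X ^ (k : ℕ)).map g := by
    have := map_pow g.mapMatrix X k
    simpa using this.symm
  simp [kry, this]

/-- strict drop of transcendence degree -/
theorem key {F D L T : Type*} [Field F] [CommRing D] [IsDomain D] [Field L] [Algebra F D]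
    [Algebra F L] (ψ : D →ₐ[F] L) (s : Set D) (hfin : s.Finite)
    (hs : Algebra.IsAlgebraic (Algebra.adjoin F s) D)
    (f : D) (hf : f ≠ 0) (hψ : ψ f = 0) [Fintype T] (x : T → D)
    (hx : AlgebraicIndependent F (fun t => ψ (x t))) : Fintype.card T + 1 ≤ s.ncard := by
  have hx' : AlgebraicIndependent F x := AlgebraicIndependent.of_comp ψ hx
  have htr : Transcendental (Algebra.adjoin F (Set.range x)) f := by
    intro halg
    obtain ⟨r, hr, hd⟩ := halg.exists_nonzero_dvd (mem_nonZeroDivisors_of_ne_zero hf)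
    have h0 : ψ (r : D) = 0 := by
      obtain ⟨c, hc⟩ := hd
      have hc' : (r : D) = f * c := hc
      rw [hc', map_mul, hψ, zero_mul]
    obtain ⟨p, hp⟩ : ∃ p : MvPolynomial T F, aeval x p = (r : D) := by
      have h5 : ∀ d ∈ Algebra.adjoin F (Set.range x), ∃ p : MvPolynomial T F, aeval x p = d := by
        intro d hd
        rw [Algebra.adjoin_range_eq_range_aeval] at hd
        exact hd
      exact h5 _ r.2
    have : aeval (fun t => ψ (x t)) p = 0 := by
      rw [← h0, ← hp]
      rw [← AlgHom.comp_apply, comp_aeval]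
    have hp0 : p = 0 := by
      apply hx
      simpa using this
    apply hr
    apply Subtype.ext
    rw [← hp, hp0]
    simp
  have h2 := ((hx'.option_iff_transcendental f).2 htr).lift_cardinalMk_le_trdeg
  have h3 := Algebra.IsAlgebraic.trdeg_le_cardinalMk F s
  have h4 := h2.trans (Cardinal.lift_le.2 h3)
  have := hfin.fintype
  simp only [Cardinal.mk_fintype, Cardinal.lift_natCast, Nat.cast_le] at h4
  rw [Set.ncard_eq_toFinset_card', Set.toFinset_card]
  simpa using h4

theorem commute_mem {F D : Type*} [Field F] [CommRing D] [Algebra F D] {n : ℕ}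
    (X Y : Matrix (Fin n) (Fin n) D) (e : Fin n) (h : X * Y = Y * X) (S : Subalgebra F D)
    (hX : ∀ i j, X i j ∈ S) (hY : ∀ i, Y i e ∈ S) (i j : Fin n) :
    (kry X e).det ∈ S ∧ Y i j * (kry X e).det ∈ S := by
  have hmul : ∀ A B : Matrix (Fin n) (Fin n) D, (∀ i j, A i j ∈ S) → (∀ i j, B i j ∈ S) →
      ∀ i j, (A * B) i j ∈ S := by
    intro A B hA hB i j
    rw [Matrix.mul_apply]
    exact S.sum_mem fun k _ => S.mul_mem (hA _ _) (hB _ _)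
  have hpow : ∀ k : ℕ, ∀ i j, (X ^ k) i j ∈ S := by
    intro k
    induction k with
    | zero =>
      intro i j
      rw [pow_zero, Matrix.one_apply]
      split_ifs
      exacts [S.one_mem, S.zero_mem]
    | succ k ih => rw [pow_succ]; exact hmul _ _ ih hX
  have hk : ∀ i j, (kry X e) i j ∈ S := fun i j => hpow _ _ _
  let K0 : Matrix (Fin n) (Fin n) S := Matrix.of fun i j => ⟨kry X e i j, hk i j⟩
  have hK0 : S.val.mapMatrix K0 = kry X e := by ext; rfl
  have hdet : (kry X e).det ∈ S := by
    rw [← hK0, ← AlgHom.map_det]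
    exact Subtype.property _
  have hadj : ∀ i j, (kry X e).adjugate i j ∈ S := by
    intro i j
    rw [← hK0, ← AlgHom.map_adjugate]
    exact Subtype.property _
  refine ⟨hdet, ?_⟩
  have hYK : ∀ i k, (Y * kry X e) i k ∈ S := by
    intro i k
    have h1 : (Y * kry X e) i k = (X ^ (k : ℕ) * Y) i e := by
      have : X ^ (k : ℕ) * Y = Y * X ^ (k : ℕ) := (Commute.pow_left h k)
      rw [this]
      rfl
    rw [h1, Matrix.mul_apply]
    exact S.sum_mem fun l _ => S.mul_mem (hpow _ _ _) (hY _)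
  have := hmul _ _ hYK hadj i j
  rw [Matrix.mul_assoc, Matrix.mul_adjugate] at this
  simpa [mul_comm] using this

theorem alg_adjoin {F D : Type*} [Field F] [CommRing D] [IsDomain D] [Algebra F D] {n : ℕ}
    (X Y Z : Matrix (Fin n) (Fin n) D) (e : Fin n) (hXY : X * Y = Y * X) (hXZ : X * Z = Z * X)
    (hf : (kry X e).det ≠ 0) (s : Set D) (hX : ∀ i j, X i j ∈ s) (hY : ∀ i, Y i e ∈ s)
    (hZ : ∀ i, Z i e ∈ s)
    (hgen : ∀ S : Subalgebra F D, (∀ i j, X i j ∈ S) → (∀ i j, Y i j ∈ S) →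
      (∀ i j, Z i j ∈ S) → ∀ d, d ∈ S) :
    Algebra.IsAlgebraic (Algebra.adjoin F s) D := by
  have hss : ∀ d ∈ s, d ∈ Algebra.adjoin F s := fun d hd => Algebra.subset_adjoin hd
  have key : ∀ W : Matrix (Fin n) (Fin n) D, X * W = W * X → (∀ i, W i e ∈ s) →
      ∀ i j, IsAlgebraic (Algebra.adjoin F s) (W i j) := by
    intro W hW hWs i j
    obtain ⟨h1, h2⟩ := commute_mem X W e hW (Algebra.adjoin F s) (fun i j => hss _ (hX i j))
      (fun i => hss _ (hWs i)) i j
    refine ⟨Polynomial.C ⟨_, h1⟩ * Polynomial.X - Polynomial.C ⟨_, h2⟩, ?_, ?_⟩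
    · intro h0
      have := congrArg (fun p => Polynomial.coeff p 1) h0
      simp [Polynomial.coeff_C] at this
      exact hf (congrArg Subtype.val this)
    · simp only [map_sub, map_mul, Polynomial.aeval_C, Polynomial.aeval_X]
      change (kry X e).det * W i j - W i j * (kry X e).det = 0
      ring
  constructor
  intro d
  have := hgen ((Subalgebra.algebraicClosure (Algebra.adjoin F s) D).restrictScalars F)
    (fun i j => ?_) (key Y hXY hY) (key Z hXZ hZ) d
  · exact this
  · exact isAlgebraic_algebraMap (⟨_, hss _ (hX i j)⟩ : Algebra.adjoin F s)

theorem shift_kry {A : Type*} [CommRing A] {n : ℕ} (e : Fin n) (he : (e : ℕ) = 0) :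
    kry (Matrix.of fun i j : Fin n => if (i : ℕ) = j + 1 then (1 : A) else 0) e = 1 := by
  obtain ⟨X, hX⟩ : ∃ X : Matrix (Fin n) (Fin n) A,
    X = Matrix.of fun i j : Fin n => if (i : ℕ) = j + 1 then (1 : A) else 0 := ⟨_, rfl⟩
  rw [← hX]
  have hX' : ∀ i j, X i j = if (i : ℕ) = j + 1 then (1 : A) else 0 := by rw [hX]; intro i j; rfl
  have : ∀ k : ℕ, ∀ i : Fin n, (X ^ k) i e = if (i : ℕ) = k then 1 else 0 := by
    intro k
    induction k with
    | zero =>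
      intro i
      rw [pow_zero, Matrix.one_apply]
      simp [Fin.ext_iff, he]
    | succ k ih =>
      intro i
      rw [pow_succ', Matrix.mul_apply]
      simp only [ih, hX']
      by_cases hi : (i : ℕ) = k + 1
      · have hk : k < n := by omega
        rw [Finset.sum_eq_single ⟨k, hk⟩]
        · simp [hi]
        · intro b _ hb
          have : (b : ℕ) ≠ k := fun h => hb (Fin.ext h)
          simp [this]
        · simp
      · rw [if_neg hi]
        apply Finset.sum_eq_zero
        intro b _
        by_cases hb : (b : ℕ) = k
        · simp [hb, hi]
        · simp [hb]
  ext i k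
  simp [kry, this, Matrix.one_apply, Fin.ext_iff]

theorem nil_kry {A : Type*} [Field A] {n : ℕ} (hn : 4 ≤ n) (e : Fin n)
    (X : Matrix (Fin n) (Fin n) A) (c : A) (h : (X - c • (1 : Matrix (Fin n) (Fin n) A)) ^ 3 = 0) :
    (kry X e).det = 0 := by
  rw [← Matrix.exists_mulVec_eq_zero_iff]
  have h' : X ^ 3 - (3 * c) • X ^ 2 + (3 * c ^ 2) • X ^ 1 - c ^ 3 • X ^ 0 = 0 := by
    rw [← h]
    have : ∀ Y : Matrix (Fin n) (Fin n) A, ∀ a : A, a • Y = (algebraMap A _ a) * Y := by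
      intro Y a; rw [Algebra.smul_def]
    have hc : Commute (algebraMap A (Matrix (Fin n) (Fin n) A) c) X := Algebra.commutes c X
    have hc' : (algebraMap A (Matrix (Fin n) (Fin n) A) c) * X = X * (algebraMap A (Matrix (Fin n) (Fin n) A) c) := hc
    simp only [this, map_mul, map_pow, map_ofNat]
    generalize (algebraMap A (Matrix (Fin n) (Fin n) A) c) = C at *
    have e1 : C * X * C = X * C * C := by rw [hc']
    have e2 : X * (C * X) = X * (X * C) := by rw [hc']
    have h3 : (3 : Matrix (Fin n) (Fin n) A) = 1 + 1 + 1 := by norm_num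
    simp only [h3, pow_succ, pow_zero, one_mul, mul_one, add_mul, sub_mul, mul_sub]
    simp only [mul_assoc, hc']
    have e3 : ∀ M, C * (X * M) = X * (C * M) := by
      intro M; rw [← mul_assoc, hc', mul_assoc]
    simp only [e3, hc']
    abel
  let i0 : Fin n := ⟨0, by omega⟩
  let i1 : Fin n := ⟨1, by omega⟩
  let i2 : Fin n := ⟨2, by omega⟩
  let i3 : Fin n := ⟨3, by omega⟩
  refine ⟨Pi.single i3 1 - (3 * c) • Pi.single i2 1 + (3 * c ^ 2) • Pi.single i1 1
    - c ^ 3 • Pi.single i0 1, ?_, ?_⟩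
  · intro h0
    have := congrFun h0 i3
    simp [i0, i1, i2, i3, Fin.ext_iff] at this
  · simp only [Matrix.mulVec_sub, Matrix.mulVec_add, Matrix.mulVec_smul]
    ext i
    have := congrFun (congrFun h' i) e
    simpa [kry, i0, i1, i2, i3] using this

theorem assemble (F : Type*) [Field F] (n : ℕ) (hn : 4 ≤ n) {L : Type*} [Field L] [Algebra F L]
    (x y z : Matrix (Fin n) (Fin n) L) (hxy : x * y = y * x) (hxz : x * z = z * x)
    (hyz : y * z = z * y) (c : L) (hnil : (x - c • (1 : Matrix (Fin n) (Fin n) L)) ^ 3 = 0)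
    {ι : Type*} [Fintype ι] (w : ι → L) (hw : AlgebraicIndependent F w)
    (hcard : n * n + (n + n) ≤ Fintype.card ι)
    (hgen : ∀ G : IntermediateField F L, (∀ i j, x i j ∈ G) → (∀ i j, y i j ∈ G) →
      (∀ i j, z i j ∈ G) → ∀ l, l ∈ G)
    (X Y Z : Matrix (Fin n) (Fin n)
      (MvPolynomial ((Fin n × Fin n) ⊕ (Fin n × Fin n) ⊕ (Fin n × Fin n)) F))
    (hX : ∀ i j, X i j = MvPolynomial.X (Sum.inl (i, j)))
    (hY : ∀ i j, Y i j = MvPolynomial.X (Sum.inr (Sum.inl (i, j))))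
    (hZ : ∀ i j, Z i j = MvPolynomial.X (Sum.inr (Sum.inr (i, j))))
    (I : Ideal (MvPolynomial ((Fin n × Fin n) ⊕ (Fin n × Fin n) ⊕ (Fin n × Fin n)) F))
    (hI : I = Ideal.span
      ({p | ∃ i j, p = (X * Y - Y * X) i j} ∪ {p | ∃ i j, p = (X * Z - Z * X) i j} ∪
        {p | ∃ i j, p = (Y * Z - Z * Y) i j})) :
    ¬ I.radical.IsPrime := by
  intro hP
  let e : Fin n := ⟨0, by omega⟩
  -- evaluation at a commuting triple over a field kills the ideal
  have hker : ∀ (K : Type _) [Field K] [Algebra F K] (x y z : Matrix (Fin n) (Fin n) K),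
      x * y = y * x → x * z = z * x → y * z = z * y →
      ∃ ev : MvPolynomial ((Fin n × Fin n) ⊕ (Fin n × Fin n) ⊕ (Fin n × Fin n)) F →ₐ[F] K,
        (∀ v, ev (MvPolynomial.X v) = Sum.elim (fun p => x p.1 p.2)
          (Sum.elim (fun p => y p.1 p.2) (fun p => z p.1 p.2)) v) ∧
        X.map ev = x ∧ Y.map ev = y ∧ Z.map ev = z ∧ ∀ p ∈ I.radical, ev p = 0 := by
    intro K _ _ x y z hxy hxz hyz
    let ev : MvPolynomial ((Fin n × Fin n) ⊕ (Fin n × Fin n) ⊕ (Fin n × Fin n)) F →ₐ[F] K :=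
      aeval (Sum.elim (fun p => x p.1 p.2) (Sum.elim (fun p => y p.1 p.2) (fun p => z p.1 p.2)))
    have hx : X.map ev = x := by ext i j; simp [hX, ev]
    have hy : Y.map ev = y := by ext i j; simp [hY, ev]
    have hz : Z.map ev = z := by ext i j; simp [hZ, ev]
    refine ⟨ev, fun v => by simp [ev], hx, hy, hz, ?_⟩
    have hle : I ≤ RingHom.ker ev := by
      have hcm : ∀ A B : Matrix (Fin n) (Fin n)
          (MvPolynomial ((Fin n × Fin n) ⊕ (Fin n × Fin n) ⊕ (Fin n × Fin n)) F),
          A.map ev * B.map ev = B.map ev * A.map ev → ∀ i j, ev ((A * B - B * A) i j) = 0 := by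
        intro A B h i j
        have : (A * B - B * A).map ev = 0 := by
          have h1 := map_sub ev.mapMatrix (A * B) (B * A)
          rw [map_mul, map_mul] at h1
          simp only [AlgHom.mapMatrix_apply] at h1
          rw [h1, h, sub_self]
        exact congrFun (congrFun this i) j
      rw [hI, Ideal.span_le]
      rintro p ((⟨i, j, rfl⟩ | ⟨i, j, rfl⟩) | ⟨i, j, rfl⟩)
      · exact hcm X Y (by rw [hx, hy, hxy]) i j
      · exact hcm X Z (by rw [hx, hz, hxz]) i j
      · exact hcm Y Z (by rw [hy, hz, hyz]) i j
    intro p hp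
    obtain ⟨m, hm⟩ := hp
    have : ev (p ^ m) = 0 := hle hm
    rw [map_pow] at this
    exact eq_zero_of_pow_eq_zero this
  obtain ⟨ev, hev, evx, evy, evz, hev0⟩ := hker L x y z hxy hxz hyz
  let ψ : (MvPolynomial ((Fin n × Fin n) ⊕ (Fin n × Fin n) ⊕ (Fin n × Fin n)) F ⧸ I.radical)
    →ₐ[F] L := Ideal.Quotient.liftₐ I.radical ev hev0
  have hψ : ∀ r, ψ (Ideal.Quotient.mkₐ F I.radical r) = ev r := fun r => rfl
  -- the Krylov determinant
  have hf : Ideal.Quotient.mkₐ F I.radical (kry X e).det ≠ 0 := by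
    intro h0
    have hmem : (kry X e).det ∈ I.radical := Ideal.Quotient.eq_zero_iff_mem.1 h0
    obtain ⟨ev', -, evx', -, -, hev0'⟩ := hker L
      (Matrix.of fun i j : Fin n => if (i : ℕ) = j + 1 then (1 : L) else 0) 0 0
      (by simp) (by simp) (by simp)
    have h1 := hev0' _ hmem
    have h2 := kry_map X e ev'.toRingHom
    have h3 : X.map ev'.toRingHom = _ := evx'
    rw [h3, shift_kry e rfl, Matrix.det_one] at h2
    have h4 : ev' (kry X e).det = 1 := h2
    rw [h1] at h4
    exact zero_ne_one h4
  have hψf : ψ (Ideal.Quotient.mkₐ F I.radical (kry X e).det) = 0 := by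
    rw [hψ]
    have h2 := kry_map X e (ev : _ →+* L)
    have h3 : X.map (ev : _ →+* L) = _ := evx
    rw [h3, nil_kry hn e x c hnil] at h2
    exact h2
  have hdom : IsDomain (MvPolynomial ((Fin n × Fin n) ⊕ (Fin n × Fin n) ⊕ (Fin n × Fin n)) F ⧸
    I.radical) := Ideal.Quotient.isDomain _
  let q := Ideal.Quotient.mkₐ F I.radical
  have hq0 : ∀ A B : Matrix (Fin n) (Fin n)
      (MvPolynomial ((Fin n × Fin n) ⊕ (Fin n × Fin n) ⊕ (Fin n × Fin n)) F),
      (∀ i j, (A * B - B * A) i j ∈ I) → A.map q * B.map q = B.map q * A.map q := by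
    intro A B h
    have : (A * B - B * A).map q = 0 := by
      ext i j
      exact Ideal.Quotient.eq_zero_iff_mem.2 (Ideal.le_radical (h i j))
    have h1 := map_sub q.mapMatrix (A * B) (B * A)
    rw [map_mul, map_mul] at h1
    simp only [AlgHom.mapMatrix_apply] at h1
    rw [this] at h1
    exact (sub_eq_zero.1 h1.symm)
  have hqXY : X.map q * Y.map q = Y.map q * X.map q := hq0 X Y fun i j => by
    rw [hI]; exact Ideal.subset_span (Or.inl (Or.inl ⟨i, j, rfl⟩))
  have hqXZ : X.map q * Z.map q = Z.map q * X.map q := hq0 X Z fun i j => by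
    rw [hI]; exact Ideal.subset_span (Or.inl (Or.inr ⟨i, j, rfl⟩))
  let sf : (Fin n × Fin n) ⊕ (Fin n ⊕ Fin n) →
      (MvPolynomial ((Fin n × Fin n) ⊕ (Fin n × Fin n) ⊕ (Fin n × Fin n)) F ⧸ I.radical) :=
    Sum.elim (fun p => q (X p.1 p.2)) (Sum.elim (fun i => q (Y i e)) (fun i => q (Z i e)))
  have hsalg := alg_adjoin (F := F) (X.map q) (Y.map q) (Z.map q) e hqXY hqXZ
    (by
      have := kry_map X e q.toRingHom
      have h3 : X.map q.toRingHom = X.map q := rfl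
      rw [h3] at this
      rw [← this]; exact hf) (Set.range sf)
    (fun i j => ⟨Sum.inl (i, j), rfl⟩) (fun i => ⟨Sum.inr (Sum.inl i), rfl⟩)
    (fun i => ⟨Sum.inr (Sum.inr i), rfl⟩)
    (by
      intro S h1 h2 h3 d
      obtain ⟨p, rfl⟩ := Ideal.Quotient.mkₐ_surjective F I.radical d
      have : p ∈ S.comap q := by
        have htop : S.comap q = ⊤ := by
          rw [eq_top_iff, ← MvPolynomial.adjoin_range_X, Algebra.adjoin_le_iff]
          rintro _ ⟨(⟨i, j⟩ | ⟨i, j⟩ | ⟨i, j⟩), rfl⟩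
          · have := h1 i j
            rw [Matrix.map_apply, hX] at this
            exact this
          · have := h2 i j
            rw [Matrix.map_apply, hY] at this
            exact this
          · have := h3 i j
            rw [Matrix.map_apply, hZ] at this
            exact this
        rw [htop]; trivial
      exact this)
  have hncard : (Set.range sf).ncard ≤ n * n + (n + n) := by
    rw [← Set.image_univ]
    refine (Set.ncard_image_le (Set.finite_univ)).trans ?_
    rw [Set.ncard_univ]
    simp
  -- transcendence basis among the entries
  obtain ⟨v, hv⟩ : ∃ v : (Fin n × Fin n) ⊕ (Fin n × Fin n) ⊕ (Fin n × Fin n) → L,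
    v = Sum.elim (fun p => x p.1 p.2) (Sum.elim (fun p => y p.1 p.2) (fun p => z p.1 p.2)) :=
      ⟨_, rfl⟩
  have hLalg : Algebra.IsAlgebraic (Algebra.adjoin F (Set.range v)) L := by
    let G : IntermediateField F L := Subalgebra.toIntermediateField
      ((Subalgebra.algebraicClosure (Algebra.adjoin F (Set.range v)) L).restrictScalars F)
      (fun a ha => IsAlgebraic.inv (K := L) ha)
    have hvG : ∀ u, v u ∈ G := fun u =>
      isAlgebraic_algebraMap
        (⟨v u, Algebra.subset_adjoin ⟨u, rfl⟩⟩ : Algebra.adjoin F (Set.range v))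
    refine ⟨fun l => hgen G ?_ ?_ ?_ l⟩
    · intro i j; have := hvG (Sum.inl (i, j)); rw [hv] at this; exact this
    · intro i j; have := hvG (Sum.inr (Sum.inl (i, j))); rw [hv] at this; exact this
    · intro i j; have := hvG (Sum.inr (Sum.inr (i, j))); rw [hv] at this; exact this
  obtain ⟨t, hts, htb⟩ := exists_isTranscendenceBasis_subset (R := F) (Set.range v)
  have htfin : t.Finite := (Set.finite_range v).subset hts
  have := htfin.fintype
  choose g hg using fun b : t => hts b.2
  have hkey := key ψ (Set.range sf) (Set.finite_range sf) hsalg _ hf hψf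
    (fun b : t => q (MvPolynomial.X (g b))) (by
      have : (fun b : t => ψ (q (MvPolynomial.X (g b)))) = ((↑) : t → L) := by
        funext b
        rw [← hg b, hv, ← hev]
        exact hψ _
      rw [this]
      exact htb.1)
  have hc1 := hw.lift_cardinalMk_le_trdeg
  rw [← htb.cardinalMk_eq_trdeg] at hc1
  simp only [Cardinal.mk_fintype, Cardinal.lift_natCast, Nat.cast_le] at hc1
  have hc2 : Fintype.card ι ≤ Fintype.card t := hc1
  omega

section recover
set_option linter.unusedSectionVars false
open Matrix

variable {F L : Type*} [Field F] [Field L] [Algebra F L]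

/-- all entries lie in `G` -/
def EG {m k : Type*} (G : IntermediateField F L) (M : Matrix m k L) : Prop := ∀ i j, M i j ∈ G

theorem EG.mul {m k l : Type*} [Fintype k] {G : IntermediateField F L} {M : Matrix m k L}
    {N : Matrix k l L} (hM : EG G M) (hN : EG G N) : EG G (M * N) := by
  intro i j
  rw [Matrix.mul_apply]
  exact sum_mem fun t _ => mul_mem (hM _ _) (hN _ _)

theorem EG.add {m k : Type*} {G : IntermediateField F L} {M N : Matrix m k L}
    (hM : EG G M) (hN : EG G N) : EG G (M + N) := fun i j => add_mem (hM i j) (hN i j)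

theorem EG.sub {m k : Type*} {G : IntermediateField F L} {M N : Matrix m k L}
    (hM : EG G M) (hN : EG G N) : EG G (M - N) := fun i j => sub_mem (hM i j) (hN i j)

theorem solve_aux {l m k : Type*} [Fintype m] [Fintype k]
    [DecidableEq m] [DecidableEq k] (G : IntermediateField F L)
    (S : Matrix l m L) (W : Matrix m k L) (hW : EG G W) (hSW : EG G (S * W))
    (hinj : ∀ v : m → L, v ᵥ* W = 0 → v = 0) : EG G S := by
  let W0 : Matrix m k G := Matrix.of fun i j => ⟨W i j, hW i j⟩
  have hW0 : W0.map (algebraMap G L) = W := by ext i j; rfl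
  have hinj0 : LinearMap.ker (Matrix.toLin' W0ᵀ) = ⊥ := by
    rw [LinearMap.ker_eq_bot']
    intro v hv
    rw [Matrix.toLin'_apply, Matrix.mulVec_transpose] at hv
    have h1 : (fun i => (v i : L)) ᵥ* W = 0 := by
      have h2 := RingHom.map_vecMul (algebraMap G L) W0 v
      rw [hW0] at h2
      funext j
      have h3 := h2 j
      rw [hv] at h3
      simp only [Pi.zero_apply, map_zero] at h3
      exact h3.symm
    have h4 := hinj _ h1
    funext i
    exact Subtype.ext (congrFun h4 i)
  obtain ⟨g, hg⟩ := LinearMap.exists_leftInverse_of_injective _ hinj0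
  have h5 : LinearMap.toMatrix' g * W0ᵀ = 1 := by
    have := congrArg LinearMap.toMatrix' hg
    rw [LinearMap.toMatrix'_comp, LinearMap.toMatrix'_toLin', LinearMap.toMatrix'_id] at this
    exact this
  have h6 : W0 * (LinearMap.toMatrix' g)ᵀ = 1 := by
    have := congrArg Matrix.transpose h5
    simpa [Matrix.transpose_mul] using this
  let V : Matrix k m L := ((LinearMap.toMatrix' g)ᵀ).map (algebraMap G L)
  have h7 : W * V = 1 := by
    rw [← hW0, ← Matrix.map_mul, h6]
    exact Matrix.map_one _ (map_zero _) (map_one _)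
  have h8 : S = (S * W) * V := by rw [Matrix.mul_assoc, h7, Matrix.mul_one]
  rw [h8]
  exact hSW.mul fun i j => Subtype.property _

theorem solve {l m k : Type*} [Fintype m] [Fintype k]
    [DecidableEq m] [DecidableEq k] (G : IntermediateField F L)
    (S : Matrix l m L) (W : Fin 3 → Matrix m k L) (hW : ∀ t, EG G (W t))
    (hSW : ∀ t, EG G (S * W t))
    (hinj : ∀ v : Matrix Unit m L, (∀ t, v * W t = 0) → v = 0) : EG G S := by
  refine solve_aux G S (Matrix.of fun i (p : Fin 3 × k) => W p.1 i p.2) (fun i p => hW _ _ _)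
    (fun i p => hSW p.1 i p.2) ?_
  intro v hv
  have := hinj (Matrix.of fun _ i => v i) (fun t => by
    ext u j
    exact congrFun hv (t, j))
  funext i
  exact congrFun (congrFun this ()) i

variable {J1 J2 J3 : Type*} [Fintype J1] [Fintype J2] [Fintype J3]
  [DecidableEq J1] [DecidableEq J2] [DecidableEq J3]

/-- the left factor of the square part -/
def Th (R : Matrix J2 J3 L) : Matrix (J2 ⊕ J3) J3 L := fromRows R 1
/-- the right factor of the square part -/
def Om (R : Matrix J2 J3 L) : Matrix J2 (J2 ⊕ J3) L := fromCols 1 (-R)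
/-- first block column -/
def KK (R : Matrix J2 J3 L) (A : Matrix J2 J1 L) (B : Matrix J3 J1 L) :
    Matrix (J2 ⊕ J3) J1 L := fromRows (A + R * B) B
/-- square part -/
def HH (R : Matrix J2 J3 L) (C : Matrix J3 J2 L) : Matrix (J2 ⊕ J3) (J2 ⊕ J3) L :=
  Th R * C * Om R
/-- bottom rows -/
def TT (R : Matrix J2 J3 L) (s : Matrix J1 (J2 ⊕ J3) L) (A : Matrix J2 J1 L)
    (B : Matrix J3 J1 L) (C : Matrix J3 J2 L) : Matrix (J2 ⊕ J3) (J1 ⊕ (J2 ⊕ J3)) L :=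
  fromCols (KK R A B) (HH R C - KK R A B * s)
/-- graph of `s` -/
def Sg (s : Matrix J1 (J2 ⊕ J3) L) : Matrix (J1 ⊕ (J2 ⊕ J3)) (J2 ⊕ J3) L :=
  fromRows s (1 : Matrix (J2 ⊕ J3) (J2 ⊕ J3) L)
/-- the nilpotent matrix -/
def NN (R : Matrix J2 J3 L) (s : Matrix J1 (J2 ⊕ J3) L) (A : Matrix J2 J1 L)
    (B : Matrix J3 J1 L) (C : Matrix J3 J2 L) :
    Matrix (J1 ⊕ (J2 ⊕ J3)) (J1 ⊕ (J2 ⊕ J3)) L :=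
  Sg s * TT R s A B C

theorem Om_Th (R : Matrix J2 J3 L) : Om R * Th R = 0 := by
  simp [Om, Th, fromCols_mul_fromRows]

theorem Om_KK (R : Matrix J2 J3 L) (A : Matrix J2 J1 L) (B : Matrix J3 J1 L) :
    Om R * KK R A B = A := by
  simp [Om, KK, fromCols_mul_fromRows]

theorem HH_mul (R : Matrix J2 J3 L) (C C' : Matrix J3 J2 L) : HH R C * HH R C' = 0 := by
  calc HH R C * HH R C' = Th R * C * (Om R * Th R) * (C' * Om R) := by
        simp only [HH, Matrix.mul_assoc]
    _ = 0 := by rw [Om_Th]; simp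

theorem TT_mul (R : Matrix J2 J3 L) (s : Matrix J1 (J2 ⊕ J3) L) (A : Matrix J2 J1 L)
    (B : Matrix J3 J1 L) (C : Matrix J3 J2 L) : TT R s A B C * Sg s = HH R C := by
  simp [TT, Sg, fromCols_mul_fromRows]

theorem NN_mul (R : Matrix J2 J3 L) (s : Matrix J1 (J2 ⊕ J3) L) (A A' : Matrix J2 J1 L)
    (B B' : Matrix J3 J1 L) (C C' : Matrix J3 J2 L) :
    NN R s A B C * NN R s A' B' C' =
      Sg s * fromCols (Th R * (C * A')) (-(Th R * (C * A') * s)) := by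
  calc NN R s A B C * NN R s A' B' C'
      = Sg s * ((TT R s A B C * Sg s) * TT R s A' B' C') := by
        simp only [NN, Matrix.mul_assoc]
    _ = Sg s * (HH R C * TT R s A' B' C') := by rw [TT_mul]
    _ = _ := by
      have h : HH R C * KK R A' B' = Th R * (C * A') := by
        rw [HH, Matrix.mul_assoc, Om_KK, Matrix.mul_assoc]
      rw [TT, mul_fromCols, Matrix.mul_sub, HH_mul, ← Matrix.mul_assoc, h, zero_sub]

theorem NN_cube (R : Matrix J2 J3 L) (s : Matrix J1 (J2 ⊕ J3) L) (A : Matrix J2 J1 L)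
    (B : Matrix J3 J1 L) (C : Matrix J3 J2 L) : NN R s A B C ^ 3 = 0 := by
  calc NN R s A B C ^ 3 = Sg s * ((TT R s A B C * Sg s) *
        ((TT R s A B C * Sg s) * TT R s A B C)) := by
        simp only [NN, Matrix.mul_assoc, pow_succ, pow_zero, Matrix.one_mul]
    _ = 0 := by
      rw [TT_mul, ← Matrix.mul_assoc (HH R C), HH_mul]; simp

theorem NN_trace (R : Matrix J2 J3 L) (s : Matrix J1 (J2 ⊕ J3) L) (A : Matrix J2 J1 L)
    (B : Matrix J3 J1 L) (C : Matrix J3 J2 L) : (NN R s A B C).trace = 0 := by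
  rw [NN, Matrix.trace_mul_comm, TT_mul, HH, Matrix.mul_assoc, Matrix.trace_mul_comm,
    Matrix.mul_assoc, Om_Th]
  simp

theorem recover [CharZero L] (G : IntermediateField F L) (hne : Nonempty J2)
    (R : Matrix J2 J3 L) (s : Matrix J1 (J2 ⊕ J3) L)
    (A : Fin 3 → Matrix J2 J1 L) (B : Fin 3 → Matrix J3 J1 L) (C : Fin 3 → Matrix J3 J2 L)
    (c : Fin 3 → L)
    (hA : ∀ v : Matrix Unit J2 L, (∀ t, v * A t = 0) → v = 0)
    (hC : ∀ v : Matrix Unit J3 L, (∀ t, v * C t = 0) → v = 0)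
    (hX : ∀ t, EG G (c t • 1 + NN R s (A t) (B t) (C t))) :
    (∀ t, c t ∈ G) ∧ EG G R ∧ EG G s ∧ (∀ t, EG G (A t)) ∧ (∀ t, EG G (B t)) ∧
      (∀ t, EG G (C t)) := by
  have hc : ∀ t, c t ∈ G := by
    intro t
    have h1 : (c t • 1 + NN R s (A t) (B t) (C t)).trace ∈ G :=
      sum_mem fun i _ => hX t i i
    rw [Matrix.trace_add, NN_trace, add_zero, Matrix.trace_smul, Matrix.trace_one,
      smul_eq_mul] at h1
    have h2 : ((Fintype.card (J1 ⊕ (J2 ⊕ J3)) : ℕ) : L) ≠ 0 := by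
      rw [Nat.cast_ne_zero]
      have : Nonempty (J1 ⊕ (J2 ⊕ J3)) := ⟨Sum.inr (Sum.inl hne.some)⟩
      exact Fintype.card_ne_zero
    have h3 := div_mem h1 (natCast_mem G (Fintype.card (J1 ⊕ (J2 ⊕ J3))))
    rwa [mul_div_cancel_right₀ _ h2] at h3
  have hN : ∀ t, EG G (NN R s (A t) (B t) (C t)) := by
    intro t
    have h1 : EG G (c t • (1 : Matrix (J1 ⊕ (J2 ⊕ J3)) (J1 ⊕ (J2 ⊕ J3)) L)) := by
      intro i j
      rw [Matrix.smul_apply, Matrix.one_apply, smul_eq_mul]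
      split_ifs
      · simpa using hc t
      · simp
    have h2 := (hX t).sub h1
    rwa [add_sub_cancel_left] at h2
  have hNrows : ∀ t, NN R s (A t) (B t) (C t) =
      fromRows (s * TT R s (A t) (B t) (C t)) (TT R s (A t) (B t) (C t)) := by
    intro t
    rw [NN, Sg, fromRows_mul, Matrix.one_mul]
  have hT : ∀ t, EG G (TT R s (A t) (B t) (C t)) := by
    intro t i j
    have := hN t (Sum.inr i) j
    rw [hNrows] at this
    exact this
  have hsT : ∀ t, EG G (s * TT R s (A t) (B t) (C t)) := by
    intro t i j
    have := hN t (Sum.inl i) j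
    rw [hNrows] at this
    exact this
  have hK : ∀ t, EG G (KK R (A t) (B t)) := fun t i j => hT t i (Sum.inl j)
  have hs : EG G s := by
    refine solve G s _ hT hsT ?_
    intro v hv
    have h1 : ∀ t, v * KK R (A t) (B t) = 0 := by
      intro t
      have := hv t
      rw [TT, mul_fromCols] at this
      ext i j
      exact congrFun (congrFun this i) (Sum.inl j)
    have h2 : ∀ t, v * HH R (C t) = 0 := by
      intro t
      have h3 : v * (HH R (C t) - KK R (A t) (B t) * s) = 0 := by
        have := hv t
        rw [TT, mul_fromCols] at this
        ext i j
        exact congrFun (congrFun this i) (Sum.inr j)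
      rwa [Matrix.mul_sub, ← Matrix.mul_assoc, h1, Matrix.zero_mul, sub_zero] at h3
    have h3 : v * Th R = 0 := by
      apply hC
      intro t
      have := h2 t
      rw [HH, ← Matrix.mul_assoc, ← Matrix.mul_assoc, Om, mul_fromCols, Matrix.mul_one] at this
      ext i j
      exact congrFun (congrFun this i) (Sum.inl j)
    obtain ⟨p, q, rfl⟩ : ∃ p q, v = fromCols p q :=
      ⟨_, _, (fromCols_toCols v).symm⟩
    rw [Th, fromCols_mul_fromRows, Matrix.mul_one] at h3
    have hp : p = 0 := by
      apply hA
      intro t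
      have := h1 t
      rw [KK, fromCols_mul_fromRows, Matrix.mul_add, add_assoc, ← Matrix.mul_assoc,
        ← Matrix.add_mul, h3, Matrix.zero_mul, add_zero] at this
      exact this
    rw [hp, Matrix.zero_mul, zero_add] at h3
    rw [hp, h3]
    simp
  have hH : ∀ t, EG G (HH R (C t)) := by
    intro t
    have h1 : EG G (HH R (C t) - KK R (A t) (B t) * s) := fun i j => hT t i (Sum.inr j)
    have h2 := h1.add ((hK t).mul hs)
    rwa [sub_add_cancel] at h2
  have hHeq : ∀ t, HH R (C t) = fromCols (fromRows (R * C t) (C t))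
      (fromRows (R * C t) (C t) * (-R)) := by
    intro t
    rw [HH, Th, Om, mul_fromCols, fromRows_mul, Matrix.one_mul, Matrix.mul_one]
  have hCG : ∀ t, EG G (C t) := by
    intro t i j
    have := hH t (Sum.inr i) (Sum.inl j)
    rw [hHeq] at this
    exact this
  have hRG : EG G R := by
    refine solve G R C hCG ?_ hC
    intro t i j
    have := hH t (Sum.inl i) (Sum.inl j)
    rw [hHeq] at this
    exact this
  have hBG : ∀ t, EG G (B t) := fun t i j => hK t (Sum.inr i) j
  refine ⟨hc, hRG, hs, ?_, hBG, hCG⟩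
  intro t
  have h1 : EG G (A t + R * B t) := fun i j => hK t (Sum.inl i) j
  have h2 := h1.sub (hRG.mul (hBG t))
  rwa [add_sub_cancel_right] at h2

end recover

section generic
open Matrix

theorem det_ne_zero_of_algInd {F L m : Type*} [Field F] [Field L] [Algebra F L] [Fintype m]
    [DecidableEq m] (M : Matrix m m L)
    (h : AlgebraicIndependent F (fun p : m × m => M p.1 p.2)) : M.det ≠ 0 := by
  intro h0
  have h1 : (aeval (fun p : m × m => M p.1 p.2) : MvPolynomial (m × m) F →ₐ[F] L).mapMatrix
      (mvPolynomialX m m F) = M := by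
    ext i j
    simp [mvPolynomialX]
  rw [← h1, ← AlgHom.map_det] at h0
  exact det_mvPolynomialX_ne_zero m F (h (by simpa using h0))

theorem mul_eq_zero_of_det {L m : Type*} [Field L] [Fintype m] [DecidableEq m]
    (M : Matrix m m L) (h : M.det ≠ 0) (v : Matrix Unit m L) (hv : v * M = 0) : v = 0 := by
  have : v * M * M⁻¹ = v := Matrix.mul_nonsing_inv_cancel_right _ _ (isUnit_iff_ne_zero.2 h)
  rw [← this, hv, Matrix.zero_mul]

/-- the index type of the parameters -/
abbrev Par (a c : ℕ) : Type :=
  Fin 3 ⊕ (Fin 3 × (Fin a ⊕ Fin a) × Fin a) ⊕ (Fin 3 × Fin c × Fin a) ⊕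
    ((Fin a ⊕ Fin a) × Fin c) ⊕ (Fin a × ((Fin a ⊕ Fin a) ⊕ Fin c)) ⊕ (Fin c × Fin 3 × Fin a)

theorem generic {F L : Type*} [Field F] [Field L] [CharZero L] [Algebra F L] (a c : ℕ)
    (ha : 0 < a) (hac : c ≤ 3 * a) (w : Par a c → L) (hw : AlgebraicIndependent F w)
    (hgen : ∀ G : IntermediateField F L, (∀ u, w u ∈ G) → ∀ l, l ∈ G) :
    ∃ (N : Fin 3 → Matrix (Fin a ⊕ ((Fin a ⊕ Fin a) ⊕ Fin c)) (Fin a ⊕ ((Fin a ⊕ Fin a) ⊕ Fin c)) L)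
      (l : Fin 3 → L), (∀ i j, N i * N j = N j * N i) ∧ (∀ i, N i ^ 3 = 0) ∧
      ∀ G : IntermediateField F L, (∀ i, EG G (l i • 1 + N i)) → ∀ x, x ∈ G := by
  obtain ⟨A, hA⟩ : ∃ A : Fin 3 → Matrix (Fin a ⊕ Fin a) (Fin a) L,
    ∀ t i j, A t i j = w (Sum.inr (Sum.inl (t, i, j))) := ⟨fun t => Matrix.of fun i j => _,
      fun _ _ _ => rfl⟩
  obtain ⟨B, hB⟩ : ∃ A : Fin 3 → Matrix (Fin c) (Fin a) L,
    ∀ t i j, A t i j = w (Sum.inr (Sum.inr (Sum.inl (t, i, j)))) :=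
      ⟨fun t => Matrix.of fun i j => _, fun _ _ _ => rfl⟩
  obtain ⟨R, hR⟩ : ∃ A : Matrix (Fin a ⊕ Fin a) (Fin c) L,
    ∀ i j, A i j = w (Sum.inr (Sum.inr (Sum.inr (Sum.inl (i, j))))) :=
      ⟨Matrix.of fun i j => _, fun _ _ => rfl⟩
  obtain ⟨s, hs⟩ : ∃ A : Matrix (Fin a) ((Fin a ⊕ Fin a) ⊕ Fin c) L,
    ∀ i j, A i j = w (Sum.inr (Sum.inr (Sum.inr (Sum.inr (Sum.inl (i, j)))))) :=
      ⟨Matrix.of fun i j => _, fun _ _ => rfl⟩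
  obtain ⟨D, hD⟩ : ∃ A : Fin 3 → Matrix (Fin c) (Fin a) L,
    ∀ t i j, A t i j = w (Sum.inr (Sum.inr (Sum.inr (Sum.inr (Sum.inr (i, t, j)))))) :=
      ⟨fun t => Matrix.of fun i j => _, fun _ _ _ => rfl⟩
  let M : Matrix (Fin a ⊕ Fin a) (Fin a ⊕ Fin a) L := fromCols (A 0) (A 1)
  have hM : M.det ≠ 0 := by
    apply det_ne_zero_of_algInd (F := F)
    let φ : (Fin a ⊕ Fin a) × (Fin a ⊕ Fin a) → Par a c := fun p =>
      Sum.elim (fun j => Sum.inr (Sum.inl (0, p.1, j))) (fun j => Sum.inr (Sum.inl (1, p.1, j))) p.2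
    have hφ : Function.Injective φ := by
      rintro ⟨i, j | j⟩ ⟨i', j' | j'⟩ h <;> simp [φ] at h ⊢ <;> exact h
    convert hw.comp φ hφ using 1
    funext p
    rcases p with ⟨i, j | j⟩
    · exact hA 0 i j
    · exact hA 1 i j
  have hMinv : ∀ (E : Matrix (Fin c) (Fin a ⊕ Fin a) L), E * M⁻¹ * M = E := fun E =>
    Matrix.nonsing_inv_mul_cancel_right _ _ (isUnit_iff_ne_zero.2 hM)
  have hsplit : ∀ (P Q : Matrix (Fin c) (Fin a) L),
      fromCols P Q * M⁻¹ * A 0 = P ∧ fromCols P Q * M⁻¹ * A 1 = Q := by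
    intro P Q
    have := hMinv (fromCols P Q)
    rw [show M = fromCols (A 0) (A 1) from rfl, mul_fromCols] at this
    exact fromCols_inj this
  let C0 : Matrix (Fin c) (Fin a ⊕ Fin a) L := fromCols (D 0) (D 1) * M⁻¹
  let C1 : Matrix (Fin c) (Fin a ⊕ Fin a) L := fromCols (D 1) (D 2) * M⁻¹
  let C2 : Matrix (Fin c) (Fin a ⊕ Fin a) L := fromCols (C0 * A 2) (C1 * A 2) * M⁻¹
  have h00 : C0 * A 0 = D 0 := (hsplit _ _).1
  have h01 : C0 * A 1 = D 1 := (hsplit _ _).2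
  have h10 : C1 * A 0 = D 1 := (hsplit _ _).1
  have h11 : C1 * A 1 = D 2 := (hsplit _ _).2
  have h20 : C2 * A 0 = C0 * A 2 := (hsplit _ _).1
  have h21 : C2 * A 1 = C1 * A 2 := (hsplit _ _).2
  let C : Fin 3 → Matrix (Fin c) (Fin a ⊕ Fin a) L := ![C0, C1, C2]
  have hCA : ∀ i j, C i * A j = C j * A i := by
    intro i j
    fin_cases i <;> fin_cases j <;> simp [C, h01, h10, h20, h21]
  refine ⟨fun t => NN R s (A t) (B t) (C t), fun t => w (Sum.inl t), ?_, ?_, ?_⟩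
  · intro i j
    rw [NN_mul, NN_mul, hCA]
  · intro i
    exact NN_cube _ _ _ _ _
  · intro G hG
    have hAinj : ∀ v : Matrix Unit (Fin a ⊕ Fin a) L, (∀ t, v * A t = 0) → v = 0 := by
      intro v hv
      apply mul_eq_zero_of_det M hM
      rw [show M = fromCols (A 0) (A 1) from rfl, mul_fromCols, hv, hv]
      simp
    have hCinj : ∀ v : Matrix Unit (Fin c) L, (∀ t, v * C t = 0) → v = 0 := by
      intro v hv
      have hv0 : v * C0 = 0 := hv 0
      have hv1 : v * C1 = 0 := hv 1
      have hvD : ∀ t, v * D t = 0 := by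
        intro t
        fin_cases t
        · change v * D 0 = 0
          rw [← h00, ← Matrix.mul_assoc, hv0, Matrix.zero_mul]
        · change v * D 1 = 0
          rw [← h01, ← Matrix.mul_assoc, hv0, Matrix.zero_mul]
        · change v * D 2 = 0
          rw [← h11, ← Matrix.mul_assoc, hv1, Matrix.zero_mul]
      obtain ⟨ε⟩ : Nonempty (Fin c ↪ Fin 3 × Fin a) := by
        apply Function.Embedding.nonempty_of_card_le
        simpa using hac
      let E : Matrix (Fin c) (Fin c) L := Matrix.of fun i j => D (ε j).1 i (ε j).2
      have hE : E.det ≠ 0 := by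
        apply det_ne_zero_of_algInd (F := F)
        let φ : Fin c × Fin c → Par a c := fun p =>
          Sum.inr (Sum.inr (Sum.inr (Sum.inr (Sum.inr (p.1, ε p.2)))))
        have hφ : Function.Injective φ := by
          rintro ⟨i, j⟩ ⟨i', j'⟩ h
          simpa [φ] using h
        convert hw.comp φ hφ using 1
        funext p
        exact hD _ _ _
      apply mul_eq_zero_of_det E hE
      ext i j
      exact congrFun (congrFun (hvD (ε j).1) i) (ε j).2
    obtain ⟨r1, r2, r3, r4, r5, r6⟩ := recover G ⟨Sum.inl ⟨0, ha⟩⟩ R s A B C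
      (fun t => w (Sum.inl t)) hAinj hCinj hG
    apply hgen G
    have hDG : ∀ t, EG G (D t) := by
      intro t
      fin_cases t
      · change EG G (D 0)
        rw [← h00]; exact (r6 0).mul (r4 0)
      · change EG G (D 1)
        rw [← h01]; exact (r6 0).mul (r4 1)
      · change EG G (D 2)
        rw [← h11]; exact (r6 1).mul (r4 1)
    rintro (t | ⟨t, i, j⟩ | ⟨t, i, j⟩ | ⟨i, j⟩ | ⟨i, j⟩ | ⟨i, t, j⟩)
    · exact r1 t
    · rw [← hA]; exact r4 _ _ _
    · rw [← hB]; exact r5 _ _ _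
    · rw [← hR]; exact r2 _ _
    · rw [← hs]; exact r3 _ _
    · rw [← hD]; exact hDG _ _ _

end generic

theorem card_bound (n a r c : ℕ) (hn : n = 4 * a + r) (hc : c = a + r) (ha : 7 ≤ a) (hr1 : 1 ≤ r)
    (hr4 : r ≤ 4) :
    n*n + (n + n) ≤ 3 + (3*((a+a)*a) + (3*(c*a) + ((a+a)*c + (a*(a+a+c) + c*(3*a))))) := by
  subst hn hc
  interval_cases r <;> nlinarith

/-- Guralnick, Holbrook–Omladič: for `n ≥ 29` over an algebraically closed field of
characteristic zero, the variety `C(3,n)` of commuting triples of `n × n` matrices is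
not irreducible; equivalently, the radical of the ideal generated by the entries of the
three pairwise commutators of generic matrices is not prime. -/
theorem commuting_triples_variety_not_irreducible (F : Type*) [Field F] [IsAlgClosed F]
    [CharZero F] (n : ℕ) (hn : 29 ≤ n)
    (X Y Z : Matrix (Fin n) (Fin n)
      (MvPolynomial ((Fin n × Fin n) ⊕ (Fin n × Fin n) ⊕ (Fin n × Fin n)) F))
    (hX : ∀ i j, X i j = MvPolynomial.X (Sum.inl (i, j)))
    (hY : ∀ i j, Y i j = MvPolynomial.X (Sum.inr (Sum.inl (i, j))))
    (hZ : ∀ i j, Z i j = MvPolynomial.X (Sum.inr (Sum.inr (i, j))))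
    (I : Ideal (MvPolynomial ((Fin n × Fin n) ⊕ (Fin n × Fin n) ⊕ (Fin n × Fin n)) F))
    (hI : I = Ideal.span
      ({p | ∃ i j, p = (X * Y - Y * X) i j} ∪ {p | ∃ i j, p = (X * Z - Z * X) i j} ∪
        {p | ∃ i j, p = (Y * Z - Z * Y) i j})) :
    ¬ I.radical.IsPrime := by
  obtain ⟨a, r, ha, hr1, hr4, hnr⟩ : ∃ a r : ℕ, 7 ≤ a ∧ 1 ≤ r ∧ r ≤ 4 ∧ n = 4 * a + r :=
    ⟨(n - 1) / 4, n - 4 * ((n - 1) / 4), by omega, by omega, by omega, by omega⟩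
  let L := FractionRing (MvPolynomial (Par a (a + r)) F)
  let w : Par a (a + r) → L := fun u => algebraMap (MvPolynomial (Par a (a + r)) F) L (MvPolynomial.X u)
  have hinj : Function.Injective (algebraMap (MvPolynomial (Par a (a + r)) F) L) :=
    IsFractionRing.injective _ _
  have hw : AlgebraicIndependent F w :=
    (MvPolynomial.algebraicIndependent_X (Par a (a + r)) F).map'
      (f := IsScalarTower.toAlgHom F (MvPolynomial (Par a (a + r)) F) L) hinj
  have hchar : CharZero L := charZero_of_injective_algebraMap (algebraMap F L).injective
  have hgen : ∀ G : IntermediateField F L, (∀ u, w u ∈ G) → ∀ l, l ∈ G := by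
    intro G hG
    have h1 : ∀ p : MvPolynomial (Par a (a + r)) F, algebraMap _ L p ∈ G := by
      intro p
      have htop : G.toSubalgebra.comap
          (IsScalarTower.toAlgHom F (MvPolynomial (Par a (a + r)) F) L) = ⊤ := by
        rw [eq_top_iff, ← MvPolynomial.adjoin_range_X, Algebra.adjoin_le_iff]
        rintro _ ⟨u, rfl⟩
        exact hG u
      have : p ∈ G.toSubalgebra.comap
          (IsScalarTower.toAlgHom F (MvPolynomial (Par a (a + r)) F) L) := by
        rw [htop]; trivial
      exact this
    intro l
    obtain ⟨p, q, -, rfl⟩ := IsFractionRing.div_surjective (A := MvPolynomial (Par a (a + r)) F) l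
    exact div_mem (h1 p) (h1 q)
  obtain ⟨N, l, hcomm, hcube, hrec⟩ := generic a (a + r) (by omega) (by omega) w hw hgen
  have hcardJ : Fintype.card (Fin a ⊕ ((Fin a ⊕ Fin a) ⊕ Fin (a + r))) = n := by
    simp
    omega
  let ε : Fin a ⊕ ((Fin a ⊕ Fin a) ⊕ Fin (a + r)) ≃ Fin n := Fintype.equivFinOfCardEq hcardJ
  let Φ := Matrix.reindexAlgEquiv L L ε
  let x : Fin 3 → Matrix (Fin n) (Fin n) L := fun t => Φ (l t • 1 + N t)
  have hx : ∀ i j, x i * x j = x j * x i := by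
    intro i j
    change Φ _ * Φ _ = Φ _ * Φ _
    rw [← map_mul, ← map_mul]
    congr 1
    simp only [add_mul, mul_add, smul_mul_assoc, mul_smul_comm, one_mul, mul_one, hcomm i j,
      smul_add, smul_smul, mul_comm (l i) (l j)]
    abel
  refine assemble F n (by omega) (x 0) (x 1) (x 2) (hx 0 1) (hx 0 2) (hx 1 2) (l 0) ?_ w hw ?_ ?_
    X Y Z hX hY hZ I hI
  · have : x 0 - l 0 • (1 : Matrix (Fin n) (Fin n) L) = Φ (N 0) := by
      change Φ (l 0 • 1 + N 0) - _ = _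
      rw [map_add, map_smul, map_one, add_sub_cancel_left]
    rw [this, ← map_pow, hcube, map_zero]
  · simp only [Fintype.card_sum, Fintype.card_prod, Fintype.card_fin]
    have hcb := card_bound n a r (a + r) (by omega) rfl (by omega) (by omega) (by omega)
    nlinarith [hcb]
  · intro G h0 h1 h2
    apply hrec G
    have hent : ∀ t i j, (l t • 1 + N t) i j = x t (ε i) (ε j) := by
      intro t i j
      simp [x, Φ]
    intro t i j
    rw [hent]
    fin_cases t
    · exact h0 _ _
    · exact h1 _ _
    · exact h2 _ _
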